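/- The limit lim_{|z|→∞} z·(f_{a,b}(z) − 1) exists and equals c_1 = −(b_0 − a_0) + Σ_{i=1}^∞ (b_i − a_i); moreover c_1 equals minus the one-dimensional Lebesgue measure of 𝒞(a,b), i.e. the Lebesgue measure of 𝒞(a,b) is (b_0 − a_0) − Σ_{i=1}^∞ (b_i − a_i). -/

import Mathlib

open Filter Topology

/-- The Cantor-type set 𝒞(a,b) = [a₀,b₀] ∖ ⋃_{i≥1} (aᵢ,bᵢ), as a subset of ℝ. -/
noncomputable def cantorABReal (a b : ℕ → ℝ) : Set ℝ :=
  Set.Icc (a 0) (b 0) \ ⋃ i : ℕ, Set.Ioo (a (i + 1)) (b (i + 1))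

/-- The Cantor-type set 𝒞(a,b), viewed as a subset of ℂ. -/
noncomputable def cantorAB (a b : ℕ → ℝ) : Set ℂ :=
  (fun x : ℝ => (x : ℂ)) '' cantorABReal a b

/-- The partial product f^N(z) = ((z−b₀)/(z−a₀)) ∏_{i=1}^N (z−aᵢ)/(z−bᵢ). -/
noncomputable def partialProd (a b : ℕ → ℝ) (N : ℕ) (z : ℂ) : ℂ :=
  ((z - (b 0 : ℂ)) / (z - (a 0 : ℂ))) *
    ∏ i ∈ Finset.Icc 1 N, ((z - (a i : ℂ)) / (z - (b i : ℂ)))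

/-!
Written as `∏' i, (z - p i) / (z - q i) = ∏' i, (1 + (q i - p i) / (z - q i))`, the function
`f_{a,b}` differs from `1 + ∑' i, (q i - p i) / (z - q i)` by a remainder that is quadratic in
`∑' i, ‖(q i - p i) / (z - q i)‖ = O(1 / ‖z‖)`. After multiplication by `z` the remainder vanishes
at infinity, and Tannery's theorem evaluates the limit of the linear part as `∑' i, (q i - p i)`.
The summability needed throughout comes from the disjointness of the gaps inside `[a₀, b₀]`: their
total length is the measure of their union, which also gives the measure of `𝒞(a,b)`.
-/

section FirstOrderExpansion

variable {R ι : Type*} [NormedCommRing R] [NormOneClass R]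

lemma norm_prod_one_add_sub_one_sub_sum_le (t : Finset ι) (f : ι → R) :
    ‖∏ i ∈ t, (1 + f i) - 1 - ∑ i ∈ t, f i‖ ≤
      Real.exp (∑ i ∈ t, ‖f i‖) - 1 - ∑ i ∈ t, ‖f i‖ := by
  classical
  induction t using Finset.induction_on with
  | empty => simp
  | insert j t hj ih =>
    set P := ∏ i ∈ t, (1 + f i)
    set S := ∑ i ∈ t, ‖f i‖
    have hP : ‖P - 1‖ ≤ Real.exp S - 1 := t.norm_prod_one_add_sub_one_le f
    have hexp : (‖f j‖ + 1) * Real.exp S ≤ Real.exp (‖f j‖ + S) := by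
      rw [Real.exp_add]
      exact mul_le_mul_of_nonneg_right (Real.add_one_le_exp _) (Real.exp_nonneg _)
    rw [Finset.prod_insert hj, Finset.sum_insert hj, Finset.sum_insert hj]
    calc ‖(1 + f j) * P - 1 - (f j + ∑ i ∈ t, f i)‖
        = ‖(P - 1 - ∑ i ∈ t, f i) + f j * (P - 1)‖ := by ring_nf
      _ ≤ (Real.exp S - 1 - S) + ‖f j‖ * (Real.exp S - 1) :=
        norm_add_le_of_le ih ((norm_mul_le _ _).trans (by gcongr))
      _ ≤ Real.exp (‖f j‖ + S) - 1 - (‖f j‖ + S) := by linarith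

lemma norm_tprod_one_add_sub_one_sub_tsum_le [CompleteSpace R] {f : ι → R}
    (hf : Summable fun i => ‖f i‖) :
    ‖∏' i, (1 + f i) - 1 - ∑' i, f i‖ ≤ Real.exp (∑' i, ‖f i‖) - 1 - ∑' i, ‖f i‖ :=
  le_of_tendsto_of_tendsto'
    (((multipliable_one_add_of_summable hf).hasProd.sub_const 1).sub hf.of_norm.hasSum).norm
    ((((Real.continuous_exp.tendsto _).comp hf.hasSum).sub_const 1).sub hf.hasSum)
    fun t => norm_prod_one_add_sub_one_sub_sum_le t f

lemma norm_tprod_one_add_sub_one_sub_tsum_le_sq [CompleteSpace R] {f : ι → R}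
    (hf : Summable fun i => ‖f i‖) (hf_le : ∑' i, ‖f i‖ ≤ 1) :
    ‖∏' i, (1 + f i) - 1 - ∑' i, f i‖ ≤ (∑' i, ‖f i‖) ^ 2 := by
  have habs : |∑' i, ‖f i‖| ≤ 1 := by
    rwa [abs_of_nonneg (tsum_nonneg fun i => norm_nonneg _)]
  exact (norm_tprod_one_add_sub_one_sub_tsum_le hf).trans
    ((le_abs_self _).trans (Real.abs_exp_sub_one_sub_id_le habs))

variable {𝕜 : Type*} [NormedField 𝕜] [CompleteSpace 𝕜]

lemma norm_mul_tprod_one_add_sub_one_sub_tsum_le {s : 𝕜} {w : ι → 𝕜} {u : ι → ℝ} (hs : s ≠ 0)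
    (hu : Summable u) (hwu : ∀ i, ‖s * w i‖ ≤ u i) (hus : ∑' i, u i ≤ ‖s‖) :
    ‖s * (∏' i, (1 + w i) - 1) - ∑' i, s * w i‖ ≤ (∑' i, u i) ^ 2 / ‖s‖ := by
  have hpos : 0 < ‖s‖ := norm_pos_iff.mpr hs
  have hw_le : ∀ i, ‖w i‖ ≤ u i / ‖s‖ := fun i => by
    rw [le_div_iff₀' hpos, ← norm_mul]
    exact hwu i
  have hw : Summable fun i => ‖w i‖ :=
    (hu.div_const _).of_nonneg_of_le (fun i => norm_nonneg _) hw_le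
  have hW_le : ∑' i, ‖w i‖ ≤ (∑' i, u i) / ‖s‖ := by
    rw [← tsum_div_const]
    exact hw.tsum_le_tsum hw_le (hu.div_const _)
  calc ‖s * (∏' i, (1 + w i) - 1) - ∑' i, s * w i‖
      = ‖s‖ * ‖∏' i, (1 + w i) - 1 - ∑' i, w i‖ := by
        rw [tsum_mul_left, ← mul_sub, norm_mul]
    _ ≤ ‖s‖ * (∑' i, ‖w i‖) ^ 2 := by
        gcongr
        exact norm_tprod_one_add_sub_one_sub_tsum_le_sq hw
          (hW_le.trans (div_le_one_of_le₀ hus hpos.le))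
    _ ≤ ‖s‖ * ((∑' i, u i) / ‖s‖) ^ 2 := by gcongr
    _ = (∑' i, u i) ^ 2 / ‖s‖ := by field_simp

theorem tendsto_mul_tprod_one_add_sub_one {α : Type*} {l : Filter α} {s : α → 𝕜}
    {w : α → ι → 𝕜} {c : ι → 𝕜} {u : ι → ℝ} (hs : Tendsto s l (Bornology.cobounded 𝕜))
    (hw : ∀ i, Tendsto (fun x => s x * w x i) l (𝓝 (c i))) (hu : Summable u)
    (hwu : ∀ᶠ x in l, ∀ i, ‖s x * w x i‖ ≤ u i) :
    Tendsto (fun x => s x * (∏' i, (1 + w x i) - 1)) l (𝓝 (∑' i, c i)) := by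
  have hs_norm : Tendsto (fun x => ‖s x‖) l atTop := tendsto_norm_cobounded_atTop.comp hs
  have hlinear : Tendsto (fun x => ∑' i, s x * w x i) l (𝓝 (∑' i, c i)) :=
    tendsto_tsum_of_dominated_convergence hu hw hwu
  have hremainder :
      Tendsto (fun x => s x * (∏' i, (1 + w x i) - 1) - ∑' i, s x * w x i) l (𝓝 0) := by
    refine squeeze_zero_norm' ?_ (hs_norm.const_div_atTop ((∑' i, u i) ^ 2))
    filter_upwards [hwu, hs.eventually_ne_cobounded 0,
      hs_norm.eventually_ge_atTop (∑' i, u i)] with x hx hne hlarge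
    exact norm_mul_tprod_one_add_sub_one_sub_tsum_le hne hu hx hlarge
  simpa only [sub_add_cancel, zero_add] using hremainder.add hlinear

end FirstOrderExpansion

section RationalProduct

variable {𝕜 ι : Type*} [NormedField 𝕜]

lemma norm_div_sub_le {a z q : 𝕜} {M : ℝ} (hq : ‖q‖ ≤ M) (hz : M < ‖z‖) :
    ‖a / (z - q)‖ ≤ ‖a‖ / (‖z‖ - M) := by
  rw [norm_div]
  have hdist : ‖z‖ - M ≤ ‖z - q‖ := (sub_le_sub_left hq _).trans (norm_sub_norm_le z q)
  exact div_le_div_of_nonneg_left (norm_nonneg a) (sub_pos.mpr hz) hdist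

lemma tendsto_mul_div_sub_cobounded (a q : 𝕜) :
    Tendsto (fun z => z * (a / (z - q))) (Bornology.cobounded 𝕜) (𝓝 a) := by
  have hinv : Tendsto (fun z => (z - q)⁻¹) (Bornology.cobounded 𝕜) (𝓝 0) :=
    tendsto_inv₀_cobounded.comp (tendsto_sub_const_cobounded q)
  have hlim : Tendsto (fun z => a + q * a * (z - q)⁻¹) (Bornology.cobounded 𝕜) (𝓝 a) := by
    simpa using (hinv.const_mul (q * a)).const_add a
  refine hlim.congr' ?_
  filter_upwards [Bornology.eventually_ne_cobounded q] with z hz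
  have hne : z - q ≠ 0 := sub_ne_zero.mpr hz
  field_simp
  ring

lemma sub_div_sub_eq_one_add_div {z q : 𝕜} (p : 𝕜) (hz : z ≠ q) :
    (z - p) / (z - q) = 1 + (q - p) / (z - q) := by
  have hne : z - q ≠ 0 := sub_ne_zero.mpr hz
  field_simp
  ring

variable [CompleteSpace 𝕜] {p q : ι → 𝕜} {M : ℝ}

lemma multipliable_sub_div_sub {z : 𝕜} (hq : ∀ i, ‖q i‖ ≤ M) (hz : M < ‖z‖)
    (hpq : Summable fun i => ‖q i - p i‖) :
    Multipliable fun i => (z - p i) / (z - q i) := by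
  have hne : ∀ i, z ≠ q i := fun i => ne_of_apply_ne norm ((hq i).trans_lt hz).ne'
  simp only [sub_div_sub_eq_one_add_div _ (hne _)]
  exact multipliable_one_add_of_summable <| (hpq.div_const _).of_nonneg_of_le
    (fun i => norm_nonneg _) fun i => norm_div_sub_le (hq i) hz

theorem tendsto_mul_tprod_sub_div_sub_sub_one_cobounded (hq : ∀ i, ‖q i‖ ≤ M)
    (hpq : Summable fun i => ‖q i - p i‖) :
    Tendsto (fun z => z * (∏' i, (z - p i) / (z - q i) - 1)) (Bornology.cobounded 𝕜)
      (𝓝 (∑' i, (q i - p i))) := by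
  have hbound : ∀ᶠ z in Bornology.cobounded 𝕜, ∀ i,
      ‖z * ((q i - p i) / (z - q i))‖ ≤ 2 * ‖q i - p i‖ := by
    filter_upwards [tendsto_norm_cobounded_atTop.eventually_gt_atTop M,
      eventually_cobounded_le_norm (2 * M)] with z hz hz' i
    calc ‖z * ((q i - p i) / (z - q i))‖
        ≤ ‖z‖ * (‖q i - p i‖ / (‖z‖ - M)) := by
          rw [norm_mul]
          gcongr
          exact norm_div_sub_le (hq i) hz
      _ = ‖z‖ / (‖z‖ - M) * ‖q i - p i‖ := by ring
      _ ≤ 2 * ‖q i - p i‖ := by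
          gcongr
          rw [div_le_iff₀ (sub_pos.mpr hz)]
          linarith
  refine (tendsto_mul_tprod_one_add_sub_one tendsto_id
    (fun i => tendsto_mul_div_sub_cobounded (q i - p i) (q i))
    (hpq.mul_left 2) hbound).congr' ?_
  filter_upwards [tendsto_norm_cobounded_atTop.eventually_gt_atTop M] with z hz
  have hne : ∀ i, z ≠ q i := fun i => ne_of_apply_ne norm ((hq i).trans_lt hz).ne'
  simp only [id, sub_div_sub_eq_one_add_div _ (hne _)]

end RationalProduct

section GapVolume

open MeasureTheory
open scoped Function

variable {ι : Type*} [Countable ι] {a b : ι → ℝ} {x y : ℝ}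

lemma volume_iUnion_Ioo (hdisj : Pairwise (Disjoint on fun i => Set.Ioo (a i) (b i))) :
    volume (⋃ i, Set.Ioo (a i) (b i)) = ∑' i, ENNReal.ofReal (b i - a i) := by
  rw [measure_iUnion hdisj fun _ => measurableSet_Ioo]
  simp only [Real.volume_Ioo]

lemma summable_sub_of_Ioo_subset_Icc (hab : ∀ i, a i ≤ b i)
    (hsub : ∀ i, Set.Ioo (a i) (b i) ⊆ Set.Icc x y)
    (hdisj : Pairwise (Disjoint on fun i => Set.Ioo (a i) (b i))) :
    Summable fun i => b i - a i := by
  have hfin : ∑' i, ENNReal.ofReal (b i - a i) ≠ ⊤ := by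
    rw [← volume_iUnion_Ioo hdisj]
    exact measure_ne_top_of_subset (Set.iUnion_subset hsub) measure_Icc_lt_top.ne
  exact (ENNReal.summable_toReal hfin).congr fun i =>
    ENNReal.toReal_ofReal (sub_nonneg.mpr (hab i))

lemma volume_Icc_sdiff_iUnion_Ioo (hab : ∀ i, a i ≤ b i)
    (hsub : ∀ i, Set.Ioo (a i) (b i) ⊆ Set.Icc x y)
    (hdisj : Pairwise (Disjoint on fun i => Set.Ioo (a i) (b i))) :
    volume (Set.Icc x y \ ⋃ i, Set.Ioo (a i) (b i)) =
      ENNReal.ofReal (y - x - ∑' i, (b i - a i)) := by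
  have hnonneg : ∀ i, 0 ≤ b i - a i := fun i => sub_nonneg.mpr (hab i)
  rw [measure_sdiff (Set.iUnion_subset hsub)
      (MeasurableSet.iUnion fun _ => measurableSet_Ioo).nullMeasurableSet
      (measure_ne_top_of_subset (Set.iUnion_subset hsub) measure_Icc_lt_top.ne),
    Real.volume_Icc, volume_iUnion_Ioo hdisj,
    ← ENNReal.ofReal_tsum_of_nonneg hnonneg (summable_sub_of_Ioo_subset_Icc hab hsub hdisj),
    ENNReal.ofReal_sub _ (tsum_nonneg hnonneg)]

end GapVolume

section PartialProd

lemma isBounded_cantorAB (a b : ℕ → ℝ) : Bornology.IsBounded (cantorAB a b) :=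
  (isCompact_Icc.image Complex.continuous_ofReal).isBounded.subset
    (Set.image_mono Set.sdiff_subset)

/-- The zeros `b₀, a₁, a₂, …` of the factors of `f_{a,b}`. Since the roles of `a` and `b` are
exchanged at the index `0`, this uniform indexing turns `f_{a,b}` into a single product
`∏' i, (z - productZeros a b i) / (z - productPoles a b i)`. -/
def productZeros (a b : ℕ → ℝ) : ℕ → ℝ :=
  Function.update a 0 (b 0)

/-- The poles `a₀, b₁, b₂, …` of the factors of `f_{a,b}`, indexed like `productZeros`. -/
def productPoles (a b : ℕ → ℝ) : ℕ → ℝ :=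
  Function.update b 0 (a 0)

lemma partialProd_eq_prod_range (a b : ℕ → ℝ) (N : ℕ) (z : ℂ) :
    partialProd a b N z =
      ∏ i ∈ Finset.range (N + 1), (z - productZeros a b i) / (z - productPoles a b i) := by
  rw [partialProd, Finset.prod_range_eq_mul_Ico _ N.succ_pos, Nat.succ_eq_add_one,
    Finset.Ico_add_one_right_eq_Icc]
  refine congrArg₂ _ (by simp [productZeros, productPoles]) (Finset.prod_congr rfl fun i hi => ?_)
  have hi0 : i ≠ 0 := Nat.one_le_iff_ne_zero.mp (Finset.mem_Icc.mp hi).1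
  rw [productZeros, productPoles, Function.update_of_ne hi0, Function.update_of_ne hi0]

variable {a b : ℕ → ℝ}

lemma productPoles_sub_productZeros_succ (i : ℕ) :
    productPoles a b (i + 1) - productZeros a b (i + 1) = b (i + 1) - a (i + 1) := by
  simp [productPoles, productZeros]

lemma summable_productPoles_sub_productZeros (hsum : Summable fun i => b (i + 1) - a (i + 1)) :
    Summable fun i => productPoles a b i - productZeros a b i :=
  (summable_nat_add_iff 1).mp <| by simpa only [productPoles_sub_productZeros_succ] using hsum

lemma tsum_productPoles_sub_productZeros (hsum : Summable fun i => b (i + 1) - a (i + 1)) :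
    ∑' i, (productPoles a b i - productZeros a b i) =
      -(b 0 - a 0) + ∑' i, (b (i + 1) - a (i + 1)) := by
  rw [(summable_productPoles_sub_productZeros hsum).tsum_eq_zero_add]
  simp only [productPoles_sub_productZeros_succ]
  simp [productPoles, productZeros]

lemma exists_norm_productPoles_le (hb : Bornology.IsBounded (Set.range b)) :
    ∃ M, ∀ i, ‖(productPoles a b i : ℂ)‖ ≤ M := by
  obtain ⟨M, hM⟩ := isBounded_iff_forall_norm_le.mp (hb.insert (a 0))
  refine ⟨M, fun i => ?_⟩
  rw [Complex.norm_real]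
  refine hM _ ?_
  rcases eq_or_ne i 0 with rfl | hi
  · simp [productPoles]
  · simp [productPoles, hi]

theorem tendsto_mul_sub_one_cobounded_of_tendsto_partialProd
    (hb : Bornology.IsBounded (Set.range b)) (hsum : Summable fun i => b (i + 1) - a (i + 1))
    {f : ℂ → ℂ} (hf : ∀ᶠ z in Bornology.cobounded ℂ,
      Tendsto (fun N => partialProd a b N z) atTop (𝓝 (f z))) :
    Tendsto (fun z => z * (f z - 1)) (Bornology.cobounded ℂ)
      (𝓝 ((-(b 0 - a 0) + ∑' i, (b (i + 1) - a (i + 1)) : ℝ) : ℂ)) := by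
  obtain ⟨M, hM⟩ := exists_norm_productPoles_le (a := a) hb
  have hnorm : Summable fun i => ‖(productPoles a b i : ℂ) - productZeros a b i‖ := by
    simp only [← Complex.ofReal_sub, Complex.norm_real]
    exact (summable_productPoles_sub_productZeros hsum).norm
  have hf_eq : ∀ᶠ z in Bornology.cobounded ℂ,
      ∏' i, (z - (productZeros a b i : ℂ)) / (z - productPoles a b i) = f z := by
    filter_upwards [hf, tendsto_norm_cobounded_atTop.eventually_gt_atTop M] with z hfz hz
    have hprod := (multipliable_sub_div_sub hM hz hnorm).tendsto_prod_tprod_nat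
    simp only [partialProd_eq_prod_range] at hfz
    exact tendsto_nhds_unique hprod ((tendsto_add_atTop_iff_nat 1).mp hfz)
  have hlim := tendsto_mul_tprod_sub_div_sub_sub_one_cobounded hM hnorm
  simp only [← Complex.ofReal_sub, ← Complex.ofReal_tsum,
    tsum_productPoles_sub_productZeros hsum] at hlim
  refine hlim.congr' ?_
  filter_upwards [hf_eq] with z hz
  rw [hz]

end PartialProd

open scoped Function in
theorem stmt2_general (a b : ℕ → ℝ) (hab : ∀ i, a (i + 1) ≤ b (i + 1))
    (hsub : ∀ i, Set.Icc (a (i + 1)) (b (i + 1)) ⊆ Set.Icc (a 0) (b 0))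
    (hdisj : Pairwise (Disjoint on fun i => Set.Ioo (a (i + 1)) (b (i + 1))))
    (f : ℂ → ℂ)
    (hf : ∀ z ∉ cantorAB a b, Tendsto (fun N => partialProd a b N z) atTop (𝓝 (f z))) :
    Tendsto (fun z : ℂ => z * (f z - 1)) (Bornology.cobounded ℂ)
      (𝓝 ((-(b 0 - a 0) + ∑' i : ℕ, (b (i + 1) - a (i + 1)) : ℝ) : ℂ)) ∧
    MeasureTheory.volume (cantorABReal a b) =
      ENNReal.ofReal ((b 0 - a 0) - ∑' i : ℕ, (b (i + 1) - a (i + 1))) := by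
  have hgap : ∀ i, Set.Ioo (a (i + 1)) (b (i + 1)) ⊆ Set.Icc (a 0) (b 0) := fun i =>
    Set.Ioo_subset_Icc_self.trans (hsub i)
  have hb : Bornology.IsBounded (Set.range b) := by
    refine ((Metric.isBounded_Icc (a 0) (b 0)).insert (b 0)).subset ?_
    rintro _ ⟨_ | i, rfl⟩
    · exact Set.mem_insert _ _
    · exact Set.mem_insert_of_mem _ (hsub i (Set.right_mem_Icc.mpr (hab i)))
  exact ⟨tendsto_mul_sub_one_cobounded_of_tendsto_partialProd hb
      (summable_sub_of_Ioo_subset_Icc hab hgap hdisj)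
      (mem_of_superset (Bornology.isBounded_def.mp (isBounded_cantorAB a b)) hf),
    volume_Icc_sdiff_iUnion_Ioo hab hgap hdisj⟩

/-- lim_{|z|→∞} z·(f_{a,b}(z) − 1) exists and equals
c₁ = −(b₀−a₀) + Σ_{i≥1}(bᵢ−aᵢ); moreover c₁ = −(Lebesgue measure of 𝒞(a,b)), i.e.
the Lebesgue measure of 𝒞(a,b) equals (b₀−a₀) − Σ_{i≥1}(bᵢ−aᵢ). -/
theorem stmt2 (a b : ℕ → ℝ)
    (hab : ∀ j, a j < b j)
    (hsub : ∀ i, 1 ≤ i → Set.Icc (a i) (b i) ⊆ Set.Ioo (a 0) (b 0))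
    (hdisj : ∀ i k, 1 ≤ i → 1 ≤ k → i ≠ k →
      Disjoint (Set.Icc (a i) (b i)) (Set.Icc (a k) (b k)))
    (f : ℂ → ℂ)
    (hf : ∀ z ∉ cantorAB a b,
      Tendsto (fun N => partialProd a b N z) atTop (𝓝 (f z)))
    (hfdiff : DifferentiableOn ℂ f (cantorAB a b)ᶜ) :
    Tendsto (fun z : ℂ => z * (f z - 1)) (Bornology.cobounded ℂ)
      (𝓝 ((-(b 0 - a 0) + ∑' i : ℕ, (b (i + 1) - a (i + 1)) : ℝ) : ℂ)) ∧
    MeasureTheory.volume (cantorABReal a b) =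
      ENNReal.ofReal ((b 0 - a 0) - ∑' i : ℕ, (b (i + 1) - a (i + 1))) :=
  stmt2_general a b (fun i => (hab (i + 1)).le)
    (fun i => (hsub (i + 1) i.succ_pos).trans Set.Ioo_subset_Icc_self)
    (fun i k hik => (hdisj (i + 1) (k + 1) i.succ_pos k.succ_pos (by lia)).mono
      Set.Ioo_subset_Icc_self Set.Ioo_subset_Icc_self) f hf
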